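/- Let k ≥ 4 and let j_1, j_2 ≥ 2 be integers with j_1 + j_2 = k. Then the number of triples (σ_1, σ_2, ℓ) where: σ_1, σ_2 are permutations of {1,…,k−1} with σ_1 ∘ σ_2 = (1,2,…,k−1) (the standard (k−1)-cycle); σ_2 has exactly two cycles; ℓ : C(σ_2) → {1,2} is a bijection; exactly j_2 − 1 cycles of σ_1 intersect the cycle ℓ^{−1}(2); and exactly j_1 − 1 cycles of σ_1 intersect the cycle ℓ^{−1}(1) but do not intersect the cycle ℓ^{−1}(2); equals k − 1. -/

import Mathlib

/-- The set of cycles of a permutation `σ` of `{1,…,n}` (orbits, including fixed points),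
each cycle given as the `Finset` of its elements. -/
def cycles {n : ℕ} (σ : Equiv.Perm (Fin n)) : Finset (Finset (Fin n)) :=
  Finset.univ.image fun x => Finset.univ.filter fun y => σ.SameCycle x y

/-!
Every cycle of `σ₁` meets one of the two cycles of `σ₂`, so the two counts of cycles add up to the
number of cycles of `σ₁`, which is therefore `j₁ + j₂ - 2 = (k - 1) - 1`: `σ₁` is a
transposition `(a b)`. Multiplying the long cycle `τ` by `(a b)` cuts it at `a` and `b`; if
`b = τ ^ m a`, the piece through `a` is `a, τ a, …, τ ^ (m - 1) a`, which avoids `b` and so meets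
exactly `m` cycles of `(a b)`. Requiring the piece labelled `2` to meet `j₂ - 1` cycles fixes
`m = j₂ - 1`, and the starting point `a` of that piece is arbitrary, giving `k - 1` choices.
-/

section

open Equiv Equiv.Perm Finset

section CycleFinset

variable {α : Type*} [Fintype α] [DecidableEq α] {σ : Perm α} {a b x y : α}

/-- The cycle of `σ` through `x`, as a finset. Unlike the support of `Equiv.Perm.cycleOf`, it is
`{x}` rather than empty when `x` is a fixed point. -/
def cycleFinset (σ : Perm α) (x : α) : Finset α := {y | σ.SameCycle x y}

@[simp]
lemma mem_cycleFinset : y ∈ cycleFinset σ x ↔ σ.SameCycle x y := by simp [cycleFinset]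

lemma self_mem_cycleFinset (σ : Perm α) (x : α) : x ∈ cycleFinset σ x :=
  mem_cycleFinset.2 .rfl

lemma cycleFinset_eq_iff : cycleFinset σ x = cycleFinset σ y ↔ σ.SameCycle x y := by
  refine ⟨fun h => ?_, fun h => ?_⟩
  · exact mem_cycleFinset.1 (h ▸ self_mem_cycleFinset σ y)
  · ext z
    simpa using ⟨h.symm.trans, h.trans⟩

lemma image_erase_cycleFinset (ha : σ a ≠ a) :
    (univ.erase a).image (cycleFinset σ) = univ.image (cycleFinset σ) := by
  refine (image_subset_image (erase_subset a univ)).antisymm fun c hc => ?_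
  obtain ⟨x, -, rfl⟩ := mem_image.1 hc
  obtain rfl | hx := eq_or_ne x a
  · exact mem_image.2 ⟨σ x, by simpa using ha, cycleFinset_eq_iff.2 (by simp [SameCycle.rfl])⟩
  · exact mem_image_of_mem _ (by simpa using hx)

lemma injOn_cycleFinset_swap {s : Finset α} (hb : b ∉ s) :
    Set.InjOn (cycleFinset (swap a b)) s := by
  intro x hx y hy hxy
  have hfix : ∀ z ∈ s, z ≠ a → swap a b z = z := fun z hz hza =>
    swap_apply_of_ne_of_ne hza (ne_of_mem_of_not_mem hz hb)
  have hsame := cycleFinset_eq_iff.1 hxy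
  by_cases hxa : x = a
  · by_cases hya : y = a
    · exact hxa.trans hya.symm
    · exact hsame.eq_of_right (hfix y hy hya)
  · exact hsame.eq_of_left (hfix x hx hxa)

end CycleFinset

section Cycles

variable {n : ℕ} {σ : Perm (Fin n)} {c : Finset (Fin n)} {x : Fin n}

lemma cycles_eq_image (σ : Perm (Fin n)) : cycles σ = univ.image (cycleFinset σ) := rfl

lemma cycleFinset_mem_cycles (σ : Perm (Fin n)) (x : Fin n) : cycleFinset σ x ∈ cycles σ :=
  mem_image_of_mem _ (mem_univ x)

lemma eq_cycleFinset_of_mem (hc : c ∈ cycles σ) (hx : x ∈ c) : c = cycleFinset σ x := by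
  obtain ⟨y, -, rfl⟩ := mem_image.1 hc
  exact cycleFinset_eq_iff.2 (mem_cycleFinset.1 hx)

lemma nonempty_of_mem_cycles (hc : c ∈ cycles σ) : c.Nonempty := by
  obtain ⟨x, -, rfl⟩ := mem_image.1 hc
  exact ⟨x, self_mem_cycleFinset σ x⟩

lemma filter_inter_nonempty_cycles (σ : Perm (Fin n)) (s : Finset (Fin n)) :
    {b ∈ cycles σ | (s ∩ b).Nonempty} = s.image (cycleFinset σ) := by
  ext b
  simp only [mem_filter, mem_image]
  constructor
  · rintro ⟨hb, x, hx⟩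
    exact ⟨x, (mem_inter.1 hx).1, (eq_cycleFinset_of_mem hb (mem_inter.1 hx).2).symm⟩
  · rintro ⟨x, hx, rfl⟩
    exact ⟨cycleFinset_mem_cycles σ x, x, mem_inter.2 ⟨hx, self_mem_cycleFinset σ x⟩⟩

lemma card_cycles_one : #(cycles (1 : Perm (Fin n))) = n := by
  rw [cycles_eq_image, card_image_of_injective _ fun x y h => sameCycle_one.1
    (cycleFinset_eq_iff.1 h), card_univ, Fintype.card_fin]

lemma isSwap_of_injOn_cycleFinset {a : Fin n} (ha : σ a ≠ a)
    (hinj : Set.InjOn (cycleFinset σ) (univ.erase a : Finset (Fin n))) : σ.IsSwap := by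
  have hsupport : σ.support ⊆ {a, σ⁻¹ a} := fun x hx => by
    by_contra! hxa
    simp only [mem_insert, mem_singleton, not_or, eq_inv_iff_eq] at hxa
    refine mem_support.1 hx (hinj (by simpa using hxa.2) (by simpa using hxa.1) ?_)
    exact cycleFinset_eq_iff.2 (by simp [SameCycle.rfl])
  have hne : σ ≠ 1 := fun h => ha (by simp [h])
  exact card_support_eq_two.1 (((card_le_card hsupport).trans card_le_two).antisymm
    (one_lt_card_support_of_ne_one hne))

theorem card_cycles_add_one_eq_iff : #(cycles σ) + 1 = n ↔ σ.IsSwap := by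
  constructor
  · intro h
    obtain ⟨a, ha⟩ : ∃ a, σ a ≠ a := by
      by_contra! hfix
      have := card_cycles_one (n := n)
      rw [← show σ = 1 from Equiv.ext hfix] at this
      omega
    refine isSwap_of_injOn_cycleFinset ha (card_image_iff.1 ?_)
    rw [image_erase_cycleFinset ha, ← cycles_eq_image, card_erase_of_mem (mem_univ a), card_univ,
      Fintype.card_fin]
    omega
  · rintro ⟨a, b, hab, rfl⟩
    rw [cycles_eq_image, ← image_erase_cycleFinset (a := b) (by simpa using hab),
      card_image_of_injOn (injOn_cycleFinset_swap (notMem_erase b univ)),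
      card_erase_add_one (mem_univ b), card_univ, Fintype.card_fin]

end Cycles

section CutCycle

variable {α : Type*} [DecidableEq α] {τ : Perm α} {a b : α} {m : ℕ}

lemma swap_mul_pow_apply_of_lt (hinj : Set.InjOn (fun i => (τ ^ i) a) (Set.Iic m)) {i : ℕ}
    (hi : i < m) : ((swap a ((τ ^ m) a) * τ) ^ i) a = (τ ^ i) a := by
  induction i with
  | zero => rfl
  | succ i ih =>
    rw [pow_succ', Perm.mul_apply, ih (by omega), Perm.mul_apply, ← Perm.mul_apply τ, ← pow_succ']
    refine swap_apply_of_ne_of_ne (fun h => ?_) (fun h => ?_)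
    · exact i.succ_ne_zero (hinj hi.le (Nat.zero_le m) h)
    · exact hi.ne (hinj hi.le (le_refl m) h)

lemma swap_mul_pow_apply_self (hinj : Set.InjOn (fun i => (τ ^ i) a) (Set.Iic m)) (hm : 0 < m) :
    ((swap a ((τ ^ m) a) * τ) ^ m) a = a := by
  obtain ⟨i, rfl⟩ := Nat.exists_eq_add_one.2 hm
  rw [pow_succ', Perm.mul_apply, swap_mul_pow_apply_of_lt hinj i.lt_succ_self, Perm.mul_apply,
    ← Perm.mul_apply τ, ← pow_succ', swap_apply_right]

lemma sameCycle_swap_mul_iff [Finite α] (hinj : Set.InjOn (fun i => (τ ^ i) a) (Set.Iic m))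
    (hm : 0 < m) {y : α} :
    (swap a ((τ ^ m) a) * τ).SameCycle a y ↔ ∃ i < m, (τ ^ i) a = y := by
  constructor
  · intro h
    obtain ⟨j, rfl⟩ := h.exists_nat_pow_eq
    have hperiodic : Function.IsPeriodicPt (swap a ((τ ^ m) a) * τ) m a := by
      rw [Function.IsPeriodicPt, iterate_eq_pow]
      exact swap_mul_pow_apply_self hinj hm
    refine ⟨j % m, j.mod_lt hm, ?_⟩
    rw [← swap_mul_pow_apply_of_lt hinj (j.mod_lt hm)]
    simpa only [iterate_eq_pow] using hperiodic.iterate_mod_apply j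
  · rintro ⟨i, hi, rfl⟩
    exact ⟨i, by rw [zpow_natCast, swap_mul_pow_apply_of_lt hinj hi]⟩

lemma not_sameCycle_swap_mul [Finite α] (hinj : Set.InjOn (fun i => (τ ^ i) a) (Set.Iic m))
    (hm : 0 < m) : ¬ (swap a ((τ ^ m) a) * τ).SameCycle a ((τ ^ m) a) := by
  rw [sameCycle_swap_mul_iff hinj hm]
  rintro ⟨i, hi, heq⟩
  exact hi.ne (hinj hi.le (le_refl m) heq)

variable [Fintype α]

lemma card_cycleFinset_swap_mul (hinj : Set.InjOn (fun i => (τ ^ i) a) (Set.Iic m))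
    (hm : 0 < m) : #(cycleFinset (swap a ((τ ^ m) a) * τ) a) = m := by
  have hpiece : cycleFinset (swap a ((τ ^ m) a) * τ) a = (range m).image fun i => (τ ^ i) a := by
    ext y
    simp [sameCycle_swap_mul_iff hinj hm]
  rw [hpiece, card_image_of_injOn, card_range]
  exact hinj.mono fun i hi => (mem_range.1 hi).le

lemma card_image_cycleFinset_swap (hinj : Set.InjOn (fun i => (τ ^ i) a) (Set.Iic m))
    (hm : 0 < m) : #((cycleFinset (swap a ((τ ^ m) a) * τ) a).image
      (cycleFinset (swap a ((τ ^ m) a)))) = m := by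
  rw [card_image_of_injOn (injOn_cycleFinset_swap ?_), card_cycleFinset_swap_mul hinj hm]
  simpa using not_sameCycle_swap_mul hinj hm

end CutCycle

section LongCycle

variable {α : Type*} [Fintype α] {τ : Perm α} {a b : α} {m : ℕ}

lemma injOn_pow_apply (hτ : τ.IsCycleOn (univ : Finset α)) (a : α) (hm : m < Fintype.card α) :
    Set.InjOn (fun i => (τ ^ i) a) (Set.Iic m) := fun _ hi _ hj h =>
  ((hτ.pow_apply_eq_pow_apply (mem_univ a)).1 h).eq_of_lt_of_lt (lt_of_le_of_lt hi hm)
    (lt_of_le_of_lt hj hm)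

lemma exists_pow_apply_eq (hτ : τ.IsCycleOn (univ : Finset α)) (hab : a ≠ b) :
    ∃ m, 0 < m ∧ m < Fintype.card α ∧ (τ ^ m) a = b := by
  obtain ⟨m, hm, rfl⟩ := hτ.exists_pow_eq (mem_univ a) (mem_univ b)
  exact ⟨m, Nat.pos_of_ne_zero fun h => hab (by simp [h]), hm, rfl⟩

variable [DecidableEq α]

lemma not_sameCycle_swap_mul_of_ne (hτ : τ.IsCycleOn (univ : Finset α)) (hab : a ≠ b) :
    ¬ (swap a b * τ).SameCycle a b := by
  obtain ⟨m, hm, hmα, rfl⟩ := exists_pow_apply_eq hτ hab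
  exact not_sameCycle_swap_mul (injOn_pow_apply hτ a hmα) hm

lemma sameCycle_swap_mul_or (hτ : τ.IsCycleOn (univ : Finset α)) (hab : a ≠ b) (y : α) :
    (swap a b * τ).SameCycle a y ∨ (swap a b * τ).SameCycle b y := by
  obtain ⟨m, hm, hmα, rfl⟩ := exists_pow_apply_eq hτ hab
  obtain ⟨i, hi, rfl⟩ := hτ.exists_pow_eq (mem_univ a) (mem_univ y)
  rw [card_univ] at hi
  have hreturn : (τ ^ (Fintype.card α - m)) ((τ ^ m) a) = a := by
    rw [← Perm.mul_apply, ← pow_add, Nat.sub_add_cancel hmα.le]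
    exact hτ.pow_card_apply (mem_univ a)
  obtain him | hmi := lt_or_ge i m
  · left
    exact (sameCycle_swap_mul_iff (injOn_pow_apply hτ a hmα) hm).2 ⟨i, him, rfl⟩
  · right
    -- Seen from `τ ^ m a`, the same transposition cuts off a piece of length `card α - m`.
    have hcut := sameCycle_swap_mul_iff (m := Fintype.card α - m) (y := (τ ^ i) a)
      (injOn_pow_apply hτ ((τ ^ m) a) (by omega)) (by omega)
    rw [hreturn, swap_comm] at hcut
    exact hcut.2 ⟨i - m, by omega, by rw [← Perm.mul_apply, ← pow_add, Nat.sub_add_cancel hmi]⟩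

end LongCycle

section LongCycleFin

variable {n m : ℕ} {τ : Perm (Fin n)} {a b : Fin n}

lemma cycles_swap_mul (hτ : τ.IsCycleOn (univ : Finset (Fin n))) (hab : a ≠ b) :
    cycles (swap a b * τ) = {cycleFinset (swap a b * τ) a, cycleFinset (swap a b * τ) b} := by
  ext c
  simp only [mem_insert, mem_singleton]
  constructor
  · intro hc
    obtain ⟨y, -, rfl⟩ := mem_image.1 hc
    exact (sameCycle_swap_mul_or hτ hab y).imp (fun h => cycleFinset_eq_iff.2 h.symm)
      fun h => cycleFinset_eq_iff.2 h.symm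
  · rintro (rfl | rfl) <;> exact cycleFinset_mem_cycles _ _

lemma card_cycles_swap_mul (hτ : τ.IsCycleOn (univ : Finset (Fin n))) (hab : a ≠ b) :
    #(cycles (swap a b * τ)) = 2 := by
  rw [cycles_swap_mul hτ hab, card_pair]
  exact fun h => not_sameCycle_swap_mul_of_ne hτ hab (cycleFinset_eq_iff.1 h)

/-- The pairs `(σ, c)` with `σ` a transposition (encoded by its number `n - 1` of cycles) and `c` a
cycle of the cofactor `σ⁻¹ * τ` which meets exactly `m` cycles of `σ`. -/
def markedCuts (τ : Perm (Fin n)) (m : ℕ) : Finset (Perm (Fin n) × Finset (Fin n)) :=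
  {p | p.2 ∈ cycles (p.1⁻¹ * τ) ∧ #(cycles p.1) + 1 = n ∧ #(p.2.image (cycleFinset p.1)) = m}

/-- The marked cut given by the transposition of `a` and `(τ ^ m) a`, with the piece starting at `a`
marked. -/
def cutAt (τ : Perm (Fin n)) (m : ℕ) (a : Fin n) : Perm (Fin n) × Finset (Fin n) :=
  (swap a ((τ ^ m) a), cycleFinset (swap a ((τ ^ m) a) * τ) a)

lemma exists_swap_of_mem_markedCuts (hτ : τ.IsCycleOn (univ : Finset (Fin n)))
    {p : Perm (Fin n) × Finset (Fin n)} (hp : p ∈ markedCuts τ m) :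
    ∃ a b, a ≠ b ∧ p = (swap a b, cycleFinset (swap a b * τ) a) := by
  obtain ⟨σ, c⟩ := p
  obtain ⟨hc, hσ, -⟩ : c ∈ cycles (σ⁻¹ * τ) ∧ _ := by simpa [markedCuts] using hp
  obtain ⟨a, b, hab, rfl⟩ := card_cycles_add_one_eq_iff.1 hσ
  rw [swap_inv, cycles_swap_mul hτ hab, mem_insert, mem_singleton] at hc
  obtain rfl | rfl := hc
  · exact ⟨a, b, hab, rfl⟩
  · exact ⟨b, a, hab.symm, by rw [swap_comm]⟩

lemma markedCuts_eq_image_cutAt (hτ : τ.IsCycleOn (univ : Finset (Fin n))) (hm : 0 < m)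
    (hmn : m < n) : markedCuts τ m = univ.image (cutAt τ m) := by
  have hinj : ∀ {i}, i < n → ∀ a, Set.InjOn (fun i => (τ ^ i) a) (Set.Iic i) :=
    fun hi a => injOn_pow_apply hτ a (by simpa using hi)
  ext p
  simp only [mem_image, mem_univ, true_and]
  constructor
  · intro hp
    obtain ⟨a, b, hab, rfl⟩ := exists_swap_of_mem_markedCuts hτ hp
    obtain ⟨i, hi, hin, rfl⟩ := exists_pow_apply_eq hτ hab
    have him : i = m := by
      rw [← (mem_filter.1 hp).2.2.2,
        card_image_cycleFinset_swap (hinj (by simpa using hin) a) hi]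
    exact ⟨a, by rw [cutAt, him]⟩
  · rintro ⟨a, rfl⟩
    have hne : a ≠ (τ ^ m) a := fun h => hm.ne (hinj hmn a (Nat.zero_le m) (le_refl m) h)
    refine mem_filter.2 ⟨mem_univ _, ?_, card_cycles_add_one_eq_iff.2 ⟨a, _, hne, rfl⟩,
      card_image_cycleFinset_swap (hinj hmn a) hm⟩
    rw [cutAt, swap_inv]
    exact cycleFinset_mem_cycles _ _

lemma cutAt_injective (hτ : τ.IsCycleOn (univ : Finset (Fin n))) (hm : 0 < m) (hmn : m < n) :
    Function.Injective (cutAt τ m) := by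
  have hne : ∀ a, a ≠ (τ ^ m) a := fun a h =>
    hm.ne (injOn_pow_apply hτ a (by simpa using hmn) (Nat.zero_le m) (le_refl m) h)
  intro a a' h
  obtain ⟨hswap, hcycle⟩ := Prod.mk.inj h
  have hmem : a' ∈ (swap a ((τ ^ m) a)).support := by
    rw [hswap, support_swap (hne a')]
    exact mem_insert_self _ _
  rw [support_swap (hne a), mem_insert, mem_singleton] at hmem
  refine (hmem.resolve_right fun ha' => ?_).symm
  rw [← hswap, cycleFinset_eq_iff, ha'] at hcycle
  exact not_sameCycle_swap_mul_of_ne hτ (hne a) hcycle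

theorem card_markedCuts (hτ : τ.IsCycleOn (univ : Finset (Fin n))) (hm : 0 < m) (hmn : m < n) :
    #(markedCuts τ m) = n := by
  rw [markedCuts_eq_image_cutAt hτ hm hmn, card_image_of_injective _ (cutAt_injective hτ hm hmn),
    card_univ, Fintype.card_fin]

end LongCycleFin

section Labellings

lemma card_filter_bijective_fin_two {β : Type*} [DecidableEq β] {S : Finset β} (hS : #S = 2)
    {P : ({c // c ∈ S} → Fin 2) → Prop} [DecidablePred P] {Q : β → Prop} [DecidablePred Q]
    (hPQ : ∀ ℓ (c : {c // c ∈ S}), (∀ x, ℓ x = 1 ↔ x = c) → (P ℓ ↔ Q c)) :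
    #{ℓ : {c // c ∈ S} → Fin 2 | Function.Bijective ℓ ∧ P ℓ} = #{c ∈ S | Q c} := by
  symm
  refine card_bij (fun c _ x => if x.1 = c then 1 else 0) (fun c hc => ?_)
    (fun c hc d _ h => ?_) (fun ℓ hℓ => ?_)
  · obtain ⟨hcS, hQ⟩ := mem_filter.1 hc
    refine mem_filter.2 ⟨mem_univ _, ?_, (hPQ _ ⟨c, hcS⟩ (by simp [Subtype.ext_iff])).2 hQ⟩
    refine (Fintype.bijective_iff_surjective_and_card _).2 ⟨fun y => ?_, by simp [hS]⟩
    obtain ⟨d, hd, hdc⟩ := exists_mem_ne (by omega : 1 < #S) c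
    fin_cases y
    · exact ⟨⟨d, hd⟩, by simp [hdc]⟩
    · exact ⟨⟨c, hcS⟩, by simp⟩
  · by_contra hne
    simpa [hne] using congrFun h ⟨c, (mem_filter.1 hc).1⟩
  · obtain ⟨hbij, hP⟩ := (mem_filter.1 hℓ).2
    obtain ⟨c, hc⟩ := hbij.2 1
    have hℓc : ∀ x, ℓ x = 1 ↔ x = c := fun x => by rw [← hc, hbij.1.eq_iff]
    refine ⟨c, mem_filter.2 ⟨c.2, (hPQ ℓ c hℓc).1 hP⟩, funext fun x => ?_⟩
    have hx := hℓc x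
    rw [Subtype.ext_iff] at hx
    split_ifs with hxc
    · exact (hx.2 hxc).symm
    · have := mt hx.1 hxc
      omega

variable {n m p : ℕ} {σ₁ σ₂ τ : Perm (Fin n)}

/-- The bijective labellings of the two cycles of `σ₂` for which exactly `m` cycles of `σ₁` meet the
cycle labelled `2` and exactly `p` meet the one labelled `1` but not the one labelled `2`. As in the
theorem, the labels `1`, `2` are encoded by `0`, `1` in `Fin 2`. -/
def labellings (σ₁ σ₂ : Perm (Fin n)) (m p : ℕ) : Finset ({c // c ∈ cycles σ₂} → Fin 2) :=
  {ℓ | Function.Bijective ℓ ∧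
    #{b ∈ cycles σ₁ | ∃ c : {c // c ∈ cycles σ₂}, ℓ c = 1 ∧ (c.1 ∩ b).Nonempty} = m ∧
    #{b ∈ cycles σ₁ | (∃ c : {c // c ∈ cycles σ₂}, ℓ c = 0 ∧ (c.1 ∩ b).Nonempty) ∧
      ∀ c : {c // c ∈ cycles σ₂}, ℓ c = 1 → ¬(c.1 ∩ b).Nonempty} = p}

lemma filter_meets_label_zero_only {ℓ : {c // c ∈ cycles σ₂} → Fin 2} {c : {c // c ∈ cycles σ₂}}
    (hℓ : ∀ x, ℓ x = 1 ↔ x = c) :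
    {b ∈ cycles σ₁ | (∃ d : {c // c ∈ cycles σ₂}, ℓ d = 0 ∧ (d.1 ∩ b).Nonempty) ∧
      ∀ d : {c // c ∈ cycles σ₂}, ℓ d = 1 → ¬(d.1 ∩ b).Nonempty} =
    {b ∈ cycles σ₁ | ¬(c.1 ∩ b).Nonempty} := by
  refine filter_congr fun b hb => ?_
  simp only [hℓ, forall_eq, and_iff_right_iff_imp]
  intro hcb
  obtain ⟨x, hx⟩ := nonempty_of_mem_cycles hb
  let d : {c // c ∈ cycles σ₂} := ⟨cycleFinset σ₂ x, cycleFinset_mem_cycles σ₂ x⟩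
  have hdb : (d.1 ∩ b).Nonempty := ⟨x, mem_inter.2 ⟨self_mem_cycleFinset σ₂ x, hx⟩⟩
  have hd : ℓ d ≠ 1 := fun h => hcb ((hℓ d).1 h ▸ hdb)
  exact ⟨d, by omega, hdb⟩

lemma card_labellings (hσ₂ : #(cycles σ₂) = 2) :
    #(labellings σ₁ σ₂ m p) =
      #{c ∈ cycles σ₂ | #(cycles σ₁) = m + p ∧ #(c.image (cycleFinset σ₁)) = m} := by
  refine card_filter_bijective_fin_two hσ₂ fun ℓ c hℓ => ?_
  have hsplit := card_filter_add_card_filter_not (s := cycles σ₁) fun b => (c.1 ∩ b).Nonempty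
  rw [filter_meets_label_zero_only hℓ]
  simp only [hℓ, exists_eq_left]
  rw [← filter_inter_nonempty_cycles]
  omega

lemma sum_card_labellings (hτ : τ.IsCycleOn (univ : Finset (Fin n))) (hmp : m + p + 1 = n)
    (σ₁ : Perm (Fin n)) :
    (∑ σ₂ : Perm (Fin n), if σ₁ * σ₂ = τ ∧ #(cycles σ₂) = 2 then #(labellings σ₁ σ₂ m p) else 0) =
      #{c ∈ cycles (σ₁⁻¹ * τ) | #(cycles σ₁) + 1 = n ∧ #(c.image (cycleFinset σ₁)) = m} := by
  simp only [← eq_inv_mul_iff_mul_eq, ite_and, sum_ite_eq', mem_univ, if_true]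
  have hcard : #(cycles σ₁) = m + p ↔ #(cycles σ₁) + 1 = n := by omega
  split_ifs with hσ₂
  · rw [card_labellings hσ₂]
    simp only [hcard]
  · refine (card_eq_zero.2 (filter_eq_empty_iff.2 fun c _ h => hσ₂ ?_)).symm
    obtain ⟨a, b, hab, rfl⟩ := card_cycles_add_one_eq_iff.1 h.1
    rw [swap_inv, card_cycles_swap_mul hτ hab]

end Labellings

lemma isCycleOn_univ_finRotate {n : ℕ} (hn : 2 ≤ n) :
    (finRotate n).IsCycleOn (univ : Finset (Fin n)) := by
  rw [← support_finRotate_of_le hn, coe_support_eq_set_support]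
  exact (isCycle_finRotate_of_le hn).isCycleOn

theorem stmt_10_general {n m p : ℕ} {τ : Perm (Fin n)} (hτ : τ.IsCycleOn (univ : Finset (Fin n)))
    (hm : 0 < m) (hmp : m + p + 1 = n) :
    (∑ σ₁ : Perm (Fin n), ∑ σ₂ : Perm (Fin n),
      if σ₁ * σ₂ = τ ∧ #(cycles σ₂) = 2 then #(labellings σ₁ σ₂ m p) else 0) = n := by
  calc
    _ = ∑ σ₁ : Perm (Fin n),
        #{c ∈ cycles (σ₁⁻¹ * τ) | #(cycles σ₁) + 1 = n ∧ #(c.image (cycleFinset σ₁)) = m} :=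
      sum_congr rfl fun σ₁ _ => sum_card_labellings hτ hmp σ₁
    _ = #(markedCuts τ m) := by
      rw [markedCuts, card_filter, Fintype.sum_prod_type]
      simp only [← card_filter, ← filter_filter, filter_univ_mem]
    _ = n := card_markedCuts hτ hm (by omega)

end

/-- for `k ≥ 4` and `j_1, j_2 ≥ 2` with `j_1 + j_2 = k`, the number of triples
`(σ₁, σ₂, ℓ)` with `σ₁, σ₂` permutations of `{1,…,k−1}`, `σ₁ σ₂ = (1,…,k−1)`, `σ₂` having
exactly two cycles, `ℓ : C(σ₂) → {1,2}` a bijection, exactly `j_2 − 1` cycles of `σ₁`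
intersecting `ℓ⁻¹(2)`, and exactly `j_1 − 1` cycles of `σ₁` intersecting `ℓ⁻¹(1)` but not
`ℓ⁻¹(2)`, equals `k − 1`.  (Here the label set `{1,2}` is encoded as `Fin 2`, with `0`
standing for label `1` and `1` for label `2`.) -/
theorem stmt_10 (k j₁ j₂ : ℕ) (hk : 4 ≤ k) (hj₁ : 2 ≤ j₁) (hj₂ : 2 ≤ j₂)
    (hsum : j₁ + j₂ = k) :
    (∑ σ₁ : Equiv.Perm (Fin (k - 1)), ∑ σ₂ : Equiv.Perm (Fin (k - 1)),
      if σ₁ * σ₂ = finRotate (k - 1) ∧ (cycles σ₂).card = 2 then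
        (Finset.univ.filter (fun ℓ : {c // c ∈ cycles σ₂} → Fin 2 =>
          Function.Bijective ℓ ∧
          ((cycles σ₁).filter (fun b =>
            ∃ c : {c // c ∈ cycles σ₂}, ℓ c = 1 ∧
              ((c : Finset (Fin (k - 1))) ∩ b).Nonempty)).card = j₂ - 1 ∧
          ((cycles σ₁).filter (fun b =>
            (∃ c : {c // c ∈ cycles σ₂}, ℓ c = 0 ∧
              ((c : Finset (Fin (k - 1))) ∩ b).Nonempty) ∧
            ∀ c : {c // c ∈ cycles σ₂}, ℓ c = 1 →
              ¬((c : Finset (Fin (k - 1))) ∩ b).Nonempty)).card = j₁ - 1)).card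
      else 0) = k - 1 :=
  stmt_10_general (isCycleOn_univ_finRotate (by omega)) (by omega)
    (by omega : (j₂ - 1) + (j₁ - 1) + 1 = k - 1)
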